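/- Let k ≥ 1, σ_K ≥ 0, σ_U > 0, and let M be the k × k real matrix with diagonal entries M_{ii} = (k−1)σ_K² + σ_U² and off-diagonal entries M_{ij} = −σ_K² for i ≠ j. Then M is invertible and for every index i: Σ_{j=1}^{k} (M⁻¹_{ij})² M_{jj} = ((k−1)σ_K² + σ_U²) · ((k−1)σ_K⁴ + (σ_K² + σ_U²)²) / ((kσ_K² + σ_U²)² (σ_U²)²). -/

import Mathlib

/-!
The matrices `a I + b J`, with `J` the all-ones matrix, are closed under multiplication because
`J² = k J`. Solving for the inverse within this family gives
`(a I + b J)⁻¹ = a⁻¹ I - b / (a (a + k b)) J`. The covariance matrix is the case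
`a = k σ_K² + σ_U²`, `b = -σ_K²`, for which `a + k b` collapses to `σ_U²`. Since its diagonal is
constant, the sum in question is a diagonal entry times the sum of squares of a row of the inverse.
-/

section CompoundSymmetric

variable {n R F : Type*} [DecidableEq n]

/-- The compound symmetric matrix `a I + b J`, where `J` is the all-ones matrix: its entries are
`a + b` on the diagonal and `b` elsewhere. The parameters are the coefficients of `I` and `J`,
rather than the two entry values, so that products and inverses have simple coefficients. -/
def compoundSymmetric (n : Type*) [DecidableEq n] [AddZeroClass R] (a b : R) : Matrix n n R :=
  Matrix.diagonal (fun _ => a) + Matrix.of fun _ _ => b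

theorem compoundSymmetric_apply [AddZeroClass R] (a b : R) (i j : n) :
    compoundSymmetric n a b i j = (if i = j then a else 0) + b := by
  simp [compoundSymmetric, Matrix.diagonal_apply]

theorem compoundSymmetric_one_zero [AddMonoidWithOne R] :
    compoundSymmetric n (1 : R) 0 = 1 := by
  ext i j
  simp [compoundSymmetric_apply, Matrix.one_apply]

theorem eq_compoundSymmetric [AddGroup R] {M : Matrix n n R} {d b : R}
    (hdiag : ∀ i, M i i = d) (hoff : ∀ i j, i ≠ j → M i j = b) :
    M = compoundSymmetric n (d - b) b := by
  ext i j
  rcases eq_or_ne i j with rfl | hij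
  · simp [compoundSymmetric_apply, hdiag]
  · simp [compoundSymmetric_apply, hoff i j hij, hij]

variable [Fintype n]

theorem compoundSymmetric_mul [NonUnitalNonAssocSemiring R] (a b c d : R) :
    compoundSymmetric n a b * compoundSymmetric n c d =
      compoundSymmetric n (a * c) (a * d + b * c + Fintype.card n • (b * d)) := by
  ext i j
  simp [Matrix.mul_apply, compoundSymmetric_apply, add_mul, mul_add, Finset.sum_add_distrib,
    add_assoc, add_left_comm]

theorem sum_sq_compoundSymmetric_apply [CommRing R] (a b : R) (i : n) :
    ∑ j, compoundSymmetric n a b i j ^ 2 = (a + b) ^ 2 + ((Fintype.card n : R) - 1) * b ^ 2 := by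
  have entry_sq (j : n) :
      compoundSymmetric n a b i j ^ 2 = (if i = j then (a + b) ^ 2 - b ^ 2 else 0) + b ^ 2 := by
    rw [compoundSymmetric_apply]
    split_ifs <;> ring
  simp only [entry_sq, Finset.sum_add_distrib, Finset.sum_ite_eq, Finset.mem_univ, if_true,
    Finset.sum_const, Finset.card_univ, nsmul_eq_mul]
  ring

variable [Field F] {a b : F}

theorem compoundSymmetric_mul_eq_one (ha : a ≠ 0) (hab : a + Fintype.card n * b ≠ 0) :
    compoundSymmetric n a b *
      compoundSymmetric n a⁻¹ (-b / (a * (a + Fintype.card n * b))) = 1 := by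
  have coeff_J : a * (-b / (a * (a + Fintype.card n * b))) + b * a⁻¹ +
      Fintype.card n • (b * (-b / (a * (a + Fintype.card n * b)))) = 0 := by
    rw [nsmul_eq_mul]
    grind
  rw [compoundSymmetric_mul, mul_inv_cancel₀ ha, coeff_J, compoundSymmetric_one_zero]

theorem isUnit_compoundSymmetric (ha : a ≠ 0) (hab : a + Fintype.card n * b ≠ 0) :
    IsUnit (compoundSymmetric n a b) :=
  .of_mul_eq_one _ (compoundSymmetric_mul_eq_one ha hab)

theorem inv_compoundSymmetric (ha : a ≠ 0) (hab : a + Fintype.card n * b ≠ 0) :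
    (compoundSymmetric n a b)⁻¹ =
      compoundSymmetric n a⁻¹ (-b / (a * (a + Fintype.card n * b))) :=
  Matrix.inv_eq_right_inv (compoundSymmetric_mul_eq_one ha hab)

end CompoundSymmetric

/-- The entries are given by the variances `vK = σ_K²` and `vU = σ_U²` themselves. -/
theorem stmt_13_general {n F : Type*} [Fintype n] [DecidableEq n] [Field F] {vK vU : F}
    (hvU : vU ≠ 0) (hvKU : Fintype.card n * vK + vU ≠ 0) {M : Matrix n n F}
    (hMdiag : ∀ i, M i i = ((Fintype.card n : F) - 1) * vK + vU)
    (hMoff : ∀ i j, i ≠ j → M i j = -vK) :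
    IsUnit M ∧ ∀ i, ∑ j, (M⁻¹ i j) ^ 2 * M j j =
      (((Fintype.card n : F) - 1) * vK + vU) *
          (((Fintype.card n : F) - 1) * vK ^ 2 + (vK + vU) ^ 2) /
        ((Fintype.card n * vK + vU) ^ 2 * vU ^ 2) := by
  have hM : M = compoundSymmetric n (Fintype.card n * vK + vU) (-vK) := by
    rw [eq_compoundSymmetric hMdiag hMoff]
    congr 1
    ring
  have hsum : Fintype.card n * vK + vU + Fintype.card n * -vK = vU := by ring
  have hsum_ne : Fintype.card n * vK + vU + Fintype.card n * -vK ≠ 0 := hsum.symm ▸ hvU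
  refine ⟨hM ▸ isUnit_compoundSymmetric hvKU hsum_ne, fun i => ?_⟩
  have hMinv : M⁻¹ = compoundSymmetric n (Fintype.card n * vK + vU)⁻¹
      (vK / ((Fintype.card n * vK + vU) * vU)) := by
    rw [hM, inv_compoundSymmetric hvKU hsum_ne, hsum, neg_neg]
  simp only [hMdiag, ← Finset.sum_mul]
  rw [hMinv, sum_sq_compoundSymmetric_apply]
  field_simp
  ring

/-- with homogeneous noise variances, the covariance matrix
`M` (diagonal `(k−1)σ_K² + σ_U²`, off-diagonal `−σ_K²`) is invertible and the
privacy-loss variance quantity `Σ_j (M⁻¹_{ij})² M_{jj}` has the stated closed form. -/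
theorem stmt_13 (k : ℕ) (hk : 1 ≤ k) (σK σU : ℝ) (hσK : 0 ≤ σK) (hσU : 0 < σU)
    (M : Matrix (Fin k) (Fin k) ℝ)
    (hMdiag : ∀ i, M i i = (k - 1 : ℝ) * σK ^ 2 + σU ^ 2)
    (hMoff : ∀ i j, i ≠ j → M i j = -σK ^ 2) :
    IsUnit M ∧ ∀ i, ∑ j, (M⁻¹ i j) ^ 2 * M j j =
      ((k - 1 : ℝ) * σK ^ 2 + σU ^ 2) * ((k - 1 : ℝ) * σK ^ 4 + (σK ^ 2 + σU ^ 2) ^ 2) /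
        (((k : ℝ) * σK ^ 2 + σU ^ 2) ^ 2 * (σU ^ 2) ^ 2) := by
  have hvKU : (Fintype.card (Fin k) : ℝ) * σK ^ 2 + σU ^ 2 ≠ 0 := by positivity
  simpa [← pow_mul] using
    stmt_13_general (pow_ne_zero 2 hσU.ne') hvKU (by simpa using hMdiag) hMoff
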